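/- β₁ = 1 and β₂ = (1+√5)/2. In particular, for β ∈ (1,2], the set 𝐔_β contains a sequence of smallest period 2 if and only if β > (1+√5)/2. -/

import Mathlib

open Filter Set

noncomputable section

namespace FatSierpinski

/-- The digit set Ω = {(0,0),(1,0),(0,1)} ⊆ ℝ². -/
def OmegaR : Set (ℝ × ℝ) := {(0, 0), (1, 0), (0, 1)}

/-- The fat Sierpinski gasket `S_β` (sequences are 0-indexed: `d i` is the digit d_{i+1}). -/
def Sfat (β : ℝ) : Set (ℝ × ℝ) :=
  {x | ∃ d : ℕ → ℝ × ℝ, (∀ i, d i ∈ OmegaR) ∧ x = ∑' i : ℕ, (β ^ (i + 1))⁻¹ • d i}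

/-- The convex hull `Δ_β` of `S_β`. -/
def Delta (β : ℝ) : Set (ℝ × ℝ) := convexHull ℝ (Sfat β)

/-- The map `f_d(x) = (x + d)/β`. -/
def fmap (β : ℝ) (d : ℝ × ℝ) (x : ℝ × ℝ) : ℝ × ℝ := β⁻¹ • (x + d)

/-- The overlap region `O_β = ⋃_{c ≠ d ∈ Ω} f_c(Δ_β) ∩ f_d(Δ_β)`. -/
def Ofat (β : ℝ) : Set (ℝ × ℝ) :=
  ⋃ c ∈ OmegaR, ⋃ d ∈ OmegaR, ⋃ (_ : c ≠ d), (fmap β c '' Delta β) ∩ (fmap β d '' Delta β)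

/-- The univoque set of codings `𝐔_β`. -/
def Ufat (β : ℝ) : Set (ℕ → ℝ × ℝ) :=
  {d | (∀ i, d i ∈ OmegaR) ∧
    ∀ n : ℕ, (∑' i : ℕ, (β ^ (i + 1))⁻¹ • d (n + i)) ∉ Ofat β}

/-- `d` has smallest period `k`. -/
def SmallestPeriod {α : Type*} (d : ℕ → α) (k : ℕ) : Prop :=
  0 < k ∧ (∀ i, d (i + k) = d i) ∧ ∀ j, 0 < j → j < k → ∃ i, d (i + j) ≠ d i

/-- The critical base `β_k`. -/
def betaK (k : ℕ) : ℝ :=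
  sInf {β : ℝ | β ∈ Set.Ioc (1 : ℝ) 2 ∧ ∃ d ∈ Ufat β, SmallestPeriod d k}

/-- Strict lexicographic order on sequences. -/
def seqLT {α : Type*} [Preorder α] (a b : ℕ → α) : Prop :=
  ∃ n, (∀ i < n, a i = b i) ∧ a n < b n

/-- Weak lexicographic order on sequences. -/
def seqLE {α : Type*} [Preorder α] (a b : ℕ → α) : Prop :=
  seqLT a b ∨ a = b

/-- `a` is a 0-1 sequence. -/
def IsBinary (a : ℕ → ℕ) : Prop := ∀ i, a i ≤ 1

/-- `a` does not end with `0^∞`. -/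
def NotEndInZeros (a : ℕ → ℕ) : Prop := ∀ N, ∃ i, N ≤ i ∧ a i ≠ 0

/-- `∑_{i=1}^∞ a_i β^{-i} = 1` (0-indexed: `a i` is a_{i+1}). -/
def SumsToOne (β : ℝ) (a : ℕ → ℕ) : Prop :=
  ∑' i : ℕ, (a i : ℝ) / β ^ (i + 1) = 1

/-- `a` is the quasi-greedy β-expansion of 1: the lexicographically largest
binary sequence not ending in `0^∞` whose value in base β is 1. -/
def IsQuasiGreedy (β : ℝ) (a : ℕ → ℕ) : Prop :=
  IsBinary a ∧ NotEndInZeros a ∧ SumsToOne β a ∧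
    ∀ b : ℕ → ℕ, IsBinary b → NotEndInZeros b → SumsToOne β b → seqLE b a

/-- `w⁺`: replace the final digit 0 of a block by 1. -/
def plusBlock (w : List ℕ) : List ℕ := w.dropLast ++ [1]

/-- `Θ` flips the outer digits of every consecutive triple
(000↦101, 001↦100, 100↦001, 101↦000). -/
def thetaBlock (w : List ℕ) : List ℕ :=
  w.mapIdx fun i x => if i % 3 = 1 then x else 1 - x

/-- `tB n` is the block `t_{n+1}`: `t_1 = 100`, `t_{n+1} = t_n⁺ Θ(t_n⁺)`. -/
def tB : ℕ → List ℕ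
  | 0 => [1, 0, 0]
  | n + 1 => plusBlock (tB n) ++ thetaBlock (plusBlock (tB n))

/-- The sequence `u w^∞` (the block `u` followed by `w` repeated forever). -/
def prefixPeriodic (u w : List ℕ) : ℕ → ℕ := fun i =>
  if i < u.length then u.getD i 0 else w.getD ((i - u.length) % w.length) 0

/-- The periodic sequence `w^∞`. -/
def periodicSeq (w : List ℕ) : ℕ → ℕ := fun i => w.getD (i % w.length) 0

/-- The componentwise limit `λ = 101001000101…` of the blocks `t_n`
(the digit `λ_{i+1}` has stabilized in `t_{i+2} = tB (i+1)`). -/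
def lamSeq : ℕ → ℕ := fun i => (tB (i + 1)).getD i 0

/-- `β_c` is the unique base in (1,2] with `∑ λ_i β^{-i} = 1`. -/
def IsBetaC (β : ℝ) : Prop := β ∈ Set.Ioc (1 : ℝ) 2 ∧ SumsToOne β lamSeq

/-- The sequence `t_{n+2}⁺ (Θ(t_{n+2}))^∞`, the quasi-greedy expansion of 1 for `β̂_n`. -/
def hatSeq (n : ℕ) : ℕ → ℕ :=
  prefixPeriodic (plusBlock (tB (n + 1))) (thetaBlock (tB (n + 1)))

/-- The Sharkovskii ordering `k ⊳ ℓ` on positive integers. -/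
def Sharkovskii (k l : ℕ) : Prop :=
  ∃ a b c d : ℕ, k = 2 ^ a * (2 * b + 1) ∧ l = 2 ^ c * (2 * d + 1) ∧ k ≠ l ∧
    ((1 ≤ b ∧ d = 0) ∨ (1 ≤ b ∧ 1 ≤ d ∧ (a < c ∨ (a = c ∧ b < d))) ∨
      (b = 0 ∧ d = 0 ∧ c < a))

/-- The digit set Ω as pairs of naturals (for combinatorial statements). -/
def OmegaD : Set (ℕ × ℕ) := {(0, 0), (1, 0), (0, 1)}

/-- The periodic extension `(d_1 … d_k)^∞` of a block. -/
def cyc (d : List (ℕ × ℕ)) : ℕ → ℕ × ℕ := fun i => d.getD (i % d.length) (0, 0)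

/-- Strict lexicographic order on lists. -/
def listLT (u v : List ℕ) : Prop := List.Lex (· < ·) u v

/-- Weak lexicographic order on lists. -/
def listLE (u v : List ℕ) : Prop := listLT u v ∨ u = v

/-- The first components `d_1¹ … d_k¹` of a block over Ω. -/
def comp1 (d : List (ℕ × ℕ)) : List ℕ := d.map Prod.fst

/-- The second components `d_1² … d_k²` of a block over Ω. -/
def comp2 (d : List (ℕ × ℕ)) : List ℕ := d.map Prod.snd

/-- The digits `(1 - d_1⁺) … (1 - d_k⁺)` where `d⁺ = d¹ + d²`. -/
def comp3 (d : List (ℕ × ℕ)) : List ℕ := d.map fun x => 1 - x.1 - x.2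

/-- Cyclic shift of a list by `j`. -/
def rot {α : Type*} (j : ℕ) (l : List α) : List α := l.drop j ++ l.take j

/-- `d` is a representation of the binary block `a`. -/
def IsRepresentation (a : List ℕ) (d : List (ℕ × ℕ)) : Prop :=
  d.length = a.length ∧ (∀ x ∈ d, x ∈ OmegaD) ∧
  SmallestPeriod (cyc d) a.length ∧
  comp1 d = a ∧ listLE (comp3 d) (comp2 d) ∧ listLE (comp2 d) a ∧
  ∀ j < a.length,
    listLE (comp1 (rot j d)) a ∧ listLE (comp2 (rot j d)) a ∧ listLE (comp3 (rot j d)) a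

/-- A binary block is admissible if it has a representation. -/
def IsAdmissible (a : List ℕ) : Prop := ∃ d, IsRepresentation a d

/-- The `i`-th consecutive triple of a block (0-indexed). -/
def tripleAt (a : List ℕ) (i : ℕ) : List ℕ :=
  [a.getD (3 * i) 0, a.getD (3 * i + 1) 0, a.getD (3 * i + 2) 0]

/-- The edges of the directed graph on {000, 001, 100, 101} defining the subshift `X`. -/
def XEdge (u v : List ℕ) : Prop :=
  (u, v) ∈ ({([1,0,1], [0,0,1]), ([1,0,1], [0,0,0]), ([0,0,1], [0,0,0]),
             ([0,0,0], [1,0,1]), ([0,0,0], [1,0,0]), ([1,0,0], [1,0,1])} :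
      Set (List ℕ × List ℕ))



lemma geomSum {β : ℝ} (h : 1 < β) : HasSum (fun i : ℕ => (β ^ (i + 1))⁻¹) (1 / (β - 1)) := by
  have h0 : (0:ℝ) < β := by linarith
  have := (hasSum_geometric_of_lt_one (inv_nonneg.2 h0.le) (inv_lt_one_of_one_lt₀ h)).mul_left β⁻¹
  have e : β⁻¹ * (1 - β⁻¹)⁻¹ = 1 / (β - 1) := by
    have : β - 1 ≠ 0 := by linarith
    rw [← mul_inv, one_div]
    congr 1
    field_simp
  rw [e] at this
  refine this.congr_fun ?_ |> fun h => h
  intro i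
  simp [pow_succ, mul_comm]

lemma omega_bd {p : ℝ × ℝ} (h : p ∈ OmegaR) : 0 ≤ p.1 ∧ 0 ≤ p.2 ∧ p.1 + p.2 ≤ 1 := by
  rcases h with h | h | h <;> rw [h] <;> norm_num

lemma summ {β : ℝ} (h : 1 < β) (d : ℕ → ℝ × ℝ) (hd : ∀ i, d i ∈ OmegaR) :
    Summable (fun i : ℕ => (β ^ (i + 1))⁻¹ • d i) := by
  refine Summable.of_norm_bounded (geomSum h).summable ?_
  intro i
  have hp : (0:ℝ) < (β ^ (i + 1))⁻¹ := by positivity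
  obtain ⟨h1, h2, h3⟩ := omega_bd (hd i)
  rw [norm_smul, Real.norm_of_nonneg hp.le]
  have : ‖d i‖ ≤ 1 := by
    rw [Prod.norm_def, Real.norm_of_nonneg h1, Real.norm_of_nonneg h2]
    exact max_le (by linarith) (by linarith)
  nlinarith

def val (β : ℝ) (d : ℕ → ℝ × ℝ) (n : ℕ) : ℝ × ℝ := ∑' i : ℕ, (β ^ (i + 1))⁻¹ • d (n + i)

lemma val_rec {β : ℝ} (h : 1 < β) (d : ℕ → ℝ × ℝ) (hd : ∀ i, d i ∈ OmegaR) (n : ℕ) :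
    β • val β d n = d n + val β d (n + 1) := by
  have h0 : β ≠ 0 := by linarith
  have s := summ h (fun i => d (n + i)) (fun i => hd _)
  unfold val
  rw [s.tsum_eq_zero_add, smul_add, ← tsum_const_smul'' β]
  congr 1
  · simp [smul_smul, h0]
  · congr 1
    funext i
    rw [smul_smul]
    congr 1
    · rw [pow_succ _ (i + 1)]; field_simp
    · congr 1; ring

lemma sfat_tri {β : ℝ} (h : 1 < β) {p : ℝ × ℝ} (hp : p ∈ Sfat β) :
    0 ≤ p.1 ∧ 0 ≤ p.2 ∧ p.1 + p.2 ≤ 1 / (β - 1) := by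
  obtain ⟨d, hd, rfl⟩ := hp
  have s := (summ h d hd).hasSum
  have s1 := s.map (AddMonoidHom.fst ℝ ℝ) continuous_fst
  have s2 := s.map (AddMonoidHom.snd ℝ ℝ) continuous_snd
  have hp : ∀ i, (0:ℝ) < (β ^ (i + 1))⁻¹ := fun i => by positivity
  refine ⟨s1.nonneg fun i => ?_, s2.nonneg fun i => ?_, hasSum_le (fun i => ?_) (s1.add s2) (geomSum h)⟩
  · have := (omega_bd (hd i)).1
    exact mul_nonneg (hp i).le this
  · have := (omega_bd (hd i)).2.1
    exact mul_nonneg (hp i).le this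
  · have := (omega_bd (hd i)).2.2
    have := hp i
    simp only [Function.comp, AddMonoidHom.coe_fst, AddMonoidHom.coe_snd, Prod.smul_fst, Prod.smul_snd, smul_eq_mul]
    nlinarith

lemma const_mem {β : ℝ} (h : 1 < β) {c : ℝ × ℝ} (hc : c ∈ OmegaR) :
    (1 / (β - 1)) • c ∈ Sfat β :=
  ⟨fun _ => c, fun _ => hc, ((geomSum h).smul_const c).tsum_eq.symm⟩

lemma mem_Delta {β : ℝ} (h : 1 < β) (p : ℝ × ℝ) :
    p ∈ Delta β ↔ 0 ≤ p.1 ∧ 0 ≤ p.2 ∧ p.1 + p.2 ≤ 1 / (β - 1) := by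
  have hb : 0 < β - 1 := by linarith
  constructor
  · intro hp
    have hc : Convex ℝ {p : ℝ × ℝ | 0 ≤ p.1 ∧ 0 ≤ p.2 ∧ p.1 + p.2 ≤ 1 / (β - 1)} := by
      rintro x ⟨hx1, hx2, hx3⟩ y ⟨hy1, hy2, hy3⟩ a b ha hb hab
      refine ⟨?_, ?_, ?_⟩
      · simp only [Prod.fst_add, Prod.smul_fst, smul_eq_mul]; positivity
      · simp only [Prod.snd_add, Prod.smul_snd, smul_eq_mul]; positivity
      · simp only [Prod.fst_add, Prod.smul_fst, Prod.snd_add, Prod.smul_snd, smul_eq_mul]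
        have e : b = 1 - a := by linarith
        subst e
        nlinarith
    exact convexHull_min (fun q hq => sfat_tri h hq) hc hp
  · rintro ⟨h1, h2, h3⟩
    have m0 := subset_convexHull ℝ _ (const_mem h (c := (0, 0)) (by simp [OmegaR]))
    have m1 := subset_convexHull ℝ _ (const_mem h (c := (1, 0)) (by simp [OmegaR]))
    have m2 := subset_convexHull ℝ _ (const_mem h (c := (0, 1)) (by simp [OmegaR]))
    have hs : (β - 1) * (p.1 + p.2) ≤ 1 := by
      rw [le_div_iff₀ hb] at h3; linarith
    have key := (convex_convexHull ℝ (Sfat β)).sum_mem (t := Finset.univ)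
      (w := ![1 - (β - 1) * (p.1 + p.2), (β - 1) * p.1, (β - 1) * p.2])
      (z := ![(1 / (β - 1)) • ((0:ℝ), (0:ℝ)), (1 / (β - 1)) • ((1:ℝ), (0:ℝ)), (1 / (β - 1)) • ((0:ℝ), (1:ℝ))])
      (by
        intro i _
        fin_cases i
        · simpa using hs
        · simpa using mul_nonneg hb.le h1
        · simpa using mul_nonneg hb.le h2)
      (by simp [Fin.sum_univ_three]; ring)
      (by
        intro i _
        fin_cases i
        · exact m0
        · exact m1
        · exact m2)
    have hne := hb.ne'
    rw [Fin.sum_univ_three] at key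
    change _ ∈ convexHull ℝ (Sfat β)
    refine (congrArg (· ∈ convexHull ℝ (Sfat β)) (Prod.ext ?_ ?_)).mp key
    · simp; field_simp
    · simp; field_simp

lemma mem_f {β : ℝ} (h : 1 < β) (c p : ℝ × ℝ) :
    p ∈ fmap β c '' Delta β ↔
      c.1 ≤ β * p.1 ∧ c.2 ≤ β * p.2 ∧ β * (p.1 + p.2) - (c.1 + c.2) ≤ 1 / (β - 1) := by
  have h0 : β ≠ 0 := by linarith
  constructor
  · rintro ⟨q, hq, rfl⟩
    obtain ⟨h1, h2, h3⟩ := (mem_Delta h q).1 hq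
    have e1 : β * (fmap β c q).1 = q.1 + c.1 := by simp [fmap]; field_simp
    have e2 : β * (fmap β c q).2 = q.2 + c.2 := by simp [fmap]; field_simp
    rw [mul_add, e1, e2]
    refine ⟨?_, ?_, ?_⟩ <;> linarith
  · rintro ⟨h1, h2, h3⟩
    refine ⟨β • p - c, (mem_Delta h _).2 ⟨?_, ?_, ?_⟩, ?_⟩
    · simpa using h1
    · simpa using h2
    · simp only [Prod.fst_sub, Prod.snd_sub, Prod.smul_fst, Prod.smul_snd, smul_eq_mul]; linarith
    · simp [fmap, smul_smul, h0]

lemma mem_O {β : ℝ} (p : ℝ × ℝ) :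
    p ∈ Ofat β ↔ ∃ c ∈ OmegaR, ∃ d ∈ OmegaR, c ≠ d ∧
      p ∈ fmap β c '' Delta β ∧ p ∈ fmap β d '' Delta β := by
  simp only [Ofat, mem_iUnion, mem_inter_iff, exists_prop]

lemma mem_U {β : ℝ} (d : ℕ → ℝ × ℝ) :
    d ∈ Ufat β ↔ (∀ i, d i ∈ OmegaR) ∧ ∀ n, val β d n ∉ Ofat β := Iff.rfl

lemma val_two {β : ℝ} (h : 1 < β) (d : ℕ → ℝ × ℝ) (hd : ∀ i, d i ∈ OmegaR)
    (hp : ∀ i, d (i + 2) = d i) (n : ℕ) :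
    val β d n = (1 / (β ^ 2 - 1)) • (β • d n + d (n + 1)) := by
  have e2 : val β d (n + 2) = val β d n := by
    unfold val
    congr 1; funext i
    rw [show n + 2 + i = (n + i) + 2 by ring, hp]
  have r1 := val_rec h d hd n
  have r2 := val_rec h d hd (n + 1)
  rw [show n + 1 + 1 = n + 2 from rfl, e2] at r2
  have hb : β ^ 2 - 1 ≠ 0 := by nlinarith
  have : (β ^ 2 - 1) • val β d n = β • d n + d (n + 1) := by
    have : β • (β • val β d n) = β • d n + (d (n + 1) + val β d n) := by
      rw [r1, smul_add, r2]
    rw [sub_smul, pow_two, mul_smul, this, one_smul]; abel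
  rw [← this, smul_smul, one_div, inv_mul_cancel₀ hb, one_smul]

lemma period_one {β : ℝ} (h : 1 < β) : ∃ d ∈ Ufat β, SmallestPeriod d 1 := by
  refine ⟨fun _ => (0, 0), ⟨fun _ => by simp [OmegaR], fun n => ?_⟩, ?_⟩
  · change val β (fun _ => (0, 0)) n ∉ _
    rw [mem_O, val_two h _ (fun _ => by simp [OmegaR]) (fun _ => rfl)]
    rintro ⟨c, hc, d, hd, hcd, h1, h2⟩
    rw [mem_f h] at h1 h2
    rcases hc with rfl | rfl | rfl <;> rcases hd with rfl | rfl | rfl <;>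
      first
      | exact absurd rfl hcd
      | (simp only [Prod.smul_mk, Prod.mk_add_mk, smul_eq_mul, mul_zero, mul_one, add_zero, zero_add, sub_zero] at h1 h2
         linarith [h1.1, h1.2.1, h2.1, h2.2.1])
  · refine ⟨one_pos, fun _ => rfl, fun j h1 h2 => by omega⟩

lemma golden_iff {β : ℝ} (h : 1 < β) : (1 + Real.sqrt 5) / 2 < β ↔ β + 1 < β ^ 2 := by
  have s := Real.sq_sqrt (show (0:ℝ) ≤ 5 by norm_num)
  have s0 := Real.sqrt_nonneg 5
  constructor
  · intro h; nlinarith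
  · intro h; by_contra hc; push Not at hc; nlinarith

lemma period_two_mp {β : ℝ} (h : 1 < β) (hx : ∃ d ∈ Ufat β, SmallestPeriod d 2) :
    β + 1 < β ^ 2 := by
  obtain ⟨d, ⟨hd, hU⟩, -, hp, hmin⟩ := hx
  by_contra hc
  push Not at hc
  have hb : 0 < β - 1 := by linarith
  have hB : 0 < β ^ 2 - 1 := by nlinarith
  have hne : d 0 ≠ d 1 := by
    intro e
    obtain ⟨i, hi⟩ := hmin 1 one_pos one_lt_two
    apply hi
    have : ∀ i, d i = d 0 ∧ d (i + 1) = d 0 := by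
      intro i
      induction i with
      | zero => exact ⟨rfl, e.symm⟩
      | succ k ih => exact ⟨ih.2, (hp k).trans ih.1⟩
    rw [(this i).1, (this i).2]
  have v0 := val_two h d hd hp 0
  have v1 := val_two h d hd hp 1
  have k1 : 1 ≤ β * (1 / (β ^ 2 - 1)) := by
    rw [mul_one_div, le_div_iff₀ hB]; linarith
  have k2 : 0 ≤ 1 / (β ^ 2 - 1) := by positivity
  have k3 : (β + 1) * (1 / (β ^ 2 - 1)) = 1 / (β - 1) := by
    have := hB.ne'
    have := hb.ne'
    field_simp; ring
  have k4 : β * (β * (1 / (β ^ 2 - 1))) = 1 + 1 / (β ^ 2 - 1) := by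
    have := hB.ne'
    field_simp; ring
  have n0 := hU 0
  have n1 := hU 1
  change val β d 0 ∉ _ at n0
  change val β d 1 ∉ _ at n1
  rw [v0, mem_O] at n0
  rw [v1, mem_O, hp 0] at n1
  generalize 1 / (β ^ 2 - 1) = t at *
  have k5 : 1 ≤ β * (t * β) := by nlinarith
  have k6 : 0 ≤ β * t := by linarith
  simp only [zero_add] at n0
  have hh0 := hd 0
  have hh1 := hd 1
  generalize d 0 = a at *
  generalize d 1 = b at *
  -- the point whose leading digit is `(0,0)` when that digit occurs
  have main : ∀ a b : ℝ × ℝ, a ∈ OmegaR → b ∈ OmegaR → a ≠ b → (b = (0, 0) → False) →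
      (t • (β • a + b)) ∈ fmap β a '' Delta β ∧ (t • (β • a + b)) ∈ fmap β b '' Delta β := by
    intro a b ha hb' hab hb0
    rw [mem_f h, mem_f h]
    rcases ha with rfl | rfl | rfl <;> rcases hb' with rfl | rfl | rfl <;>
      first
      | exact absurd rfl hab
      | exact absurd rfl hb0
      | (simp only [Prod.smul_mk, Prod.mk_add_mk, smul_eq_mul, mul_zero, mul_one, add_zero, zero_add, sub_zero]
         refine ⟨⟨?_, ?_, ?_⟩, ?_, ?_, ?_⟩ <;> nlinarith)
  by_cases hb0 : b = (0, 0)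
  · exact n1 ⟨b, hh1, a, hh0, hne.symm, main b a hh1 hh0 hne.symm (fun e => hne (e.trans hb0.symm))⟩
  · exact n0 ⟨a, hh0, b, hh1, hne, main a b hh0 hh1 hne hb0⟩

lemma period_two_mpr {β : ℝ} (h : 1 < β) (hg : β + 1 < β ^ 2) :
    ∃ d ∈ Ufat β, SmallestPeriod d 2 := by
  have hb : 0 < β - 1 := by linarith
  have hB : 0 < β ^ 2 - 1 := by nlinarith
  set d : ℕ → ℝ × ℝ := fun i => if i % 2 = 0 then (0, 0) else (1, 0) with hdd
  have hd : ∀ i, d i ∈ OmegaR := by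
    intro i
    simp only [hdd]
    split_ifs <;> simp [OmegaR]
  have hp : ∀ i, d (i + 2) = d i := by
    intro i; simp [hdd]
  refine ⟨d, (mem_U d).2 ⟨hd, fun n => ?_⟩, two_pos, hp, fun j h1 h2 => ?_⟩
  · rw [val_two h d hd hp, mem_O]
    have k1 : β * (1 / (β ^ 2 - 1)) < 1 := by
      rw [mul_one_div, div_lt_iff₀ hB]; linarith
    have k2 : 0 < 1 / (β ^ 2 - 1) := by positivity
    have k3 : (β + 1) * (1 / (β ^ 2 - 1)) = 1 / (β - 1) := by
      have := hB.ne'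
      have := hb.ne'
      field_simp; ring
    have k4 : β * (β * (1 / (β ^ 2 - 1))) = 1 + 1 / (β ^ 2 - 1) := by
      have := hB.ne'
      field_simp; ring
    have hcase : (d n = (0, 0) ∧ d (n + 1) = (1, 0)) ∨ (d n = (1, 0) ∧ d (n + 1) = (0, 0)) := by
      rcases Nat.mod_two_eq_zero_or_one n with e | e
      · left; simp [hdd, e, Nat.add_mod]
      · right; simp [hdd, e, Nat.add_mod]
    rintro ⟨c, hc, e, he, hce, h1, h2⟩
    rw [mem_f h] at h1 h2
    generalize 1 / (β ^ 2 - 1) = t at *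
    rw [← k3] at h1 h2
    obtain ⟨p1, p2, p3⟩ := h1
    obtain ⟨q1, q2, q3⟩ := h2
    rcases hcase with ⟨e1, e2⟩ | ⟨e1, e2⟩ <;> rw [e1, e2] at p1 p2 p3 q1 q2 q3 <;>
    rcases hc with rfl | rfl | rfl <;> rcases he with rfl | rfl | rfl <;>
      first
      | exact absurd rfl hce
      | (simp only [Prod.smul_mk, Prod.mk_add_mk, smul_eq_mul, mul_zero, mul_one, add_zero, zero_add, sub_zero] at p1 p2 p3 q1 q2 q3; nlinarith)
  · have : j = 1 := by omega
    subst this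
    exact ⟨0, by simp [hdd]⟩

/-- β₁ = 1 and β₂ = (1+√5)/2; moreover for β ∈ (1,2], 𝐔_β contains a
sequence of smallest period 2 iff β > (1+√5)/2. -/
theorem stmt0 :
    FatSierpinski.betaK 1 = 1 ∧
    FatSierpinski.betaK 2 = (1 + Real.sqrt 5) / 2 ∧
    ∀ β ∈ Set.Ioc (1 : ℝ) 2,
      (∃ d ∈ FatSierpinski.Ufat β, FatSierpinski.SmallestPeriod d 2) ↔
        (1 + Real.sqrt 5) / 2 < β := by
  have key : ∀ β ∈ Set.Ioc (1 : ℝ) 2,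
      (∃ d ∈ FatSierpinski.Ufat β, FatSierpinski.SmallestPeriod d 2) ↔
        (1 + Real.sqrt 5) / 2 < β := by
    rintro β ⟨h, -⟩
    rw [golden_iff h]
    exact ⟨period_two_mp h, period_two_mpr h⟩
  have s := Real.sq_sqrt (show (0:ℝ) ≤ 5 by norm_num)
  have s0 := Real.sqrt_nonneg 5
  refine ⟨?_, ?_, key⟩
  · have : {β : ℝ | β ∈ Set.Ioc (1 : ℝ) 2 ∧ ∃ d ∈ Ufat β, SmallestPeriod d 1} = Set.Ioc 1 2 := by
      ext β
      exact ⟨fun h => h.1, fun h => ⟨h, period_one h.1⟩⟩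
    rw [betaK, this, csInf_Ioc one_lt_two]
  · have : {β : ℝ | β ∈ Set.Ioc (1 : ℝ) 2 ∧ ∃ d ∈ Ufat β, SmallestPeriod d 2}
        = Set.Ioc ((1 + Real.sqrt 5) / 2) 2 := by
      ext β
      refine ⟨fun h => ⟨(key β h.1).1 h.2, h.1.2⟩, fun h => ?_⟩
      have : β ∈ Set.Ioc (1:ℝ) 2 := ⟨by nlinarith [h.1], h.2⟩
      exact ⟨this, (key β this).2 h.1⟩
    rw [betaK, this, csInf_Ioc (by nlinarith)]

end FatSierpinski
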